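/- Let n ≥ 1 and let M be an n-manifold with boundary. Suppose A, B, C : Set M satisfy A ∪ B = Set.univ and A ∩ B = C, and each of A, B, C (with the subspace topology) is homeomorphic to Bⁿ. Then Int(Set.univ) = Int(A) ∪ Int(B), Int(A) ∩ Int(B) = Int(C), and each of Int(A), Int(B), Int(C) (with the subspace topology) is homeomorphic to ℝⁿ; in particular the manifold interior of M splits as a union of two copies of ℝⁿ meeting in a copy of ℝⁿ. -/

import Mathlib

noncomputable section

/-- The closed half-space `Hⁿ = {y : ℝⁿ | y 0 ≥ 0}`. -/
def HalfSpace {n : ℕ} (hn : 1 ≤ n) : Set (EuclideanSpace ℝ (Fin n)) :=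
  {y | 0 ≤ y ⟨0, hn⟩}

/-- An `n`-manifold with boundary: every point has an open neighborhood homeomorphic
(as a subspace) to an open subset of the half-space `Hⁿ`.
(The Hausdorff condition is imposed separately via `T2Space`.) -/
def LocallyHalfSpace {n : ℕ} (hn : 1 ≤ n) (M : Type) [TopologicalSpace M] : Prop :=
  ∀ x : M, ∃ (U : Set M) (V : Set (HalfSpace hn)),
    x ∈ U ∧ IsOpen U ∧ IsOpen V ∧ Nonempty (↥U ≃ₜ ↥V)

/-- The manifold interior of a subset `S` of `M`: points `x ∈ S` admitting `U` with
`x ∈ U ⊆ S`, `U` open in the subspace topology of `S`, and `U` homeomorphic to `ℝⁿ`. -/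
def mInt (n : ℕ) {M : Type} [TopologicalSpace M] (S : Set M) : Set M :=
  {x | x ∈ S ∧ ∃ U : Set M, x ∈ U ∧ U ⊆ S ∧
    IsOpen (Subtype.val ⁻¹' U : Set S) ∧
    Nonempty (↥U ≃ₜ EuclideanSpace ℝ (Fin n))}

/-!
By invariance of domain, a Euclidean cell in `M` is open, so `x ∈ mInt n S` exactly when `x` is
interior to `S` and is the centre of a chart onto all of `ℝⁿ`, and the interior of a closed ball in
`M` is the corresponding open ball. The point at issue is that the centre `x` of such a chart cannot
be a boundary point of all three balls `A`, `B` and `C`. Balls, and balls with boundary points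
removed, are absolute extensors, and so is a union of two closed absolute extensors that meet in an
absolute extensor. Were `x` a boundary point of all three, `M` and `M ∖ {x}` would both be absolute
extensors. A chart disc around `x` and a second disc with the same boundary sphere but avoiding `x`
then form an `n`-sphere in `M` which is the boundary of an `(n + 1)`-ball, although it passes over
`x` with degree one.

Brouwer's theorem, on which both parts rest, follows from change of variables: if `r` fixes the
boundary of a convex body, then the integral of `det (1 + t • (Dr - 1))` over the body is a
polynomial in `t`. For small `t` it is the volume of the body, hence also for `t = 1`, whereas
`det (Dr)` vanishes when `r` has values in a sphere.
-/

section

open Set Metric MeasureTheory Topology Filter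
open scoped NNReal Polynomial

/-! ### No smooth retraction onto the sphere -/

section

theorem inter_frontier_nonempty_of_isPreconnected {X : Type*} [TopologicalSpace X] {s t : Set X}
    (ht : IsPreconnected t) (hs : (t ∩ s).Nonempty) (hs' : (t ∩ sᶜ).Nonempty) :
    (t ∩ frontier s).Nonempty := by
  by_contra! hempty
  have hcover : t ⊆ interior s ∪ interior sᶜ := by
    rw [← compl_frontier_eq_union_interior]
    exact fun x hxt hxs => eq_empty_iff_forall_notMem.1 hempty x ⟨hxt, hxs⟩
  obtain ⟨x, hxt, hx⟩ := hs
  obtain ⟨y, hyt, hy⟩ := hs'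
  obtain ⟨z, -, hz, hz'⟩ := ht _ _ isOpen_interior isOpen_interior hcover
    ⟨x, hxt, (hcover hxt).resolve_right fun h => interior_subset h hx⟩
    ⟨y, hyt, (hcover hyt).resolve_left fun h => hy (interior_subset h)⟩
  exact interior_subset hz' (interior_subset hz)

theorem lipschitzWith_indicator_of_eqOn_frontier {E F : Type*} [NormedAddCommGroup E]
    [NormedSpace ℝ E] [NormedAddCommGroup F] {K : ℝ≥0} {g : E → F} {s : Set E}
    (hg : LipschitzOnWith K g s) (hs : IsClosed s) (hzero : EqOn g 0 (frontier s)) :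
    LipschitzWith K (s.indicator g) := by
  have hcross : ∀ x ∈ s, ∀ y ∉ s, dist (g x) 0 ≤ K * dist x y := by
    intro x hx y hy
    obtain ⟨z, hz, hzs⟩ := inter_frontier_nonempty_of_isPreconnected
      (convex_segment (𝕜 := ℝ) x y).isPreconnected
      ⟨x, left_mem_segment ℝ x y, hx⟩ ⟨y, right_mem_segment ℝ x y, hy⟩
    have hxz : dist x z ≤ dist x y := by
      linarith [dist_add_dist_of_mem_segment hz, dist_nonneg (x := z) (y := y)]
    calc dist (g x) 0 = dist (g x) (g z) := by rw [hzero hzs, Pi.zero_apply]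
      _ ≤ K * dist x z := hg.dist_le_mul x hx z (hs.frontier_subset hzs)
      _ ≤ K * dist x y := by gcongr
  refine LipschitzWith.of_dist_le_mul fun x y => ?_
  by_cases hx : x ∈ s <;> by_cases hy : y ∈ s <;> simp only [hx, hy, indicator_of_mem,
    indicator_of_notMem, not_false_eq_true]
  · exact hg.dist_le_mul x hx y hy
  · exact hcross x hx y hy
  · rw [dist_comm, dist_comm x]
    exact hcross y hy x hx
  · rw [dist_self]
    positivity

theorem bijective_add_of_lipschitzWith {E : Type*} [NormedAddCommGroup E] [CompleteSpace E]
    {K : ℝ≥0} {g : E → E} (hg : LipschitzWith K g) (hK : K < 1) :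
    Function.Bijective fun x => x + g x := by
  constructor
  · exact (AntilipschitzWith.id.add_lipschitzWith hg (by simpa using hK)).injective
  · intro y
    have hcontr : ContractingWith K fun z => y - g z :=
      ⟨hK, LipschitzWith.of_dist_le_mul fun a b => by
        rw [dist_sub_left]; exact hg.dist_le_mul a b⟩
    exact ⟨_, eq_sub_iff_add_eq.1 hcontr.fixedPoint_isFixedPt.symm⟩

variable {E : Type*} [NormedAddCommGroup E] [NormedSpace ℝ E] [FiniteDimensional ℝ E]

open Polynomial in
theorem exists_polynomial_eval_eq_det_id_add_smul {Y : Type*} [TopologicalSpace Y]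
    {A : Y → E →L[ℝ] E} (hA : Continuous A) :
    ∃ P : C(Y, ℝ)[X], ∀ (t : ℝ) (y : Y),
      P.eval (ContinuousMap.const Y t) y = (ContinuousLinearMap.id ℝ E + t • A y).det := by
  let b := Module.finBasis ℝ E
  let N : Matrix _ _ C(Y, ℝ) := Matrix.of fun i j =>
    ⟨fun y => LinearMap.toMatrix b b (A y : E →ₗ[ℝ] E) i j, by
      simp only [LinearMap.toMatrix_apply]
      exact (b.coord i).continuous_of_finiteDimensional.comp (hA.clm_apply continuous_const)⟩
  refine ⟨(1 + (X : C(Y, ℝ)[X]) • N.map C).det, fun t y => ?_⟩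
  let φ : C(Y, ℝ)[X] →+* ℝ :=
    ((Pi.evalRingHom _ y).comp ContinuousMap.coeFnRingHom).comp
      (Polynomial.evalRingHom (ContinuousMap.const Y t))
  have hN : φ.mapMatrix (1 + (X : C(Y, ℝ)[X]) • N.map C) =
      LinearMap.toMatrix b b (ContinuousLinearMap.id ℝ E + t • A y : E →L[ℝ] E) := by
    ext i j
    by_cases hij : i = j <;> simp [φ, N, hij, LinearMap.toMatrix_apply, mul_comm t]
  calc _ = φ (1 + (X : C(Y, ℝ)[X]) • N.map C).det := rfl
    _ = (φ.mapMatrix (1 + (X : C(Y, ℝ)[X]) • N.map C)).det := φ.map_det _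
    _ = _ := by rw [hN, LinearMap.det_toMatrix, ContinuousLinearMap.det]

variable [MeasurableSpace E] [BorelSpace E] {μ : Measure E} {s : Set E}

theorem eventually_setIntegral_det_id_add_smul_fderiv [μ.IsAddHaarMeasure] (hs : IsCompact s)
    (hconv : Convex ℝ s) {g : E → E} (hg : ContDiff ℝ 1 g) (hzero : EqOn g 0 (frontier s)) :
    ∀ᶠ t in 𝓝 (0 : ℝ),
      ∫ x in s, (ContinuousLinearMap.id ℝ E + t • fderiv ℝ g x).det ∂μ = μ.real s := by
  have hD : Continuous (fderiv ℝ g) := hg.continuous_fderiv one_ne_zero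
  obtain ⟨C, hC⟩ := hs.exists_bound_of_continuousOn hD.continuousOn
  have hlip : LipschitzWith C.toNNReal (s.indicator g) :=
    lipschitzWith_indicator_of_eqOn_frontier (hconv.lipschitzOnWith_of_nnnorm_fderiv_le
      (fun x _ => hg.differentiable one_ne_zero x)
      fun x hx => NNReal.coe_le_coe.1 ((hC x hx).trans (Real.le_coe_toNNReal C))) hs.isClosed hzero
  have hsmall : ∀ᶠ t in 𝓝 (0 : ℝ), ‖t‖₊ * C.toNNReal < 1 :=
    ContinuousAt.eventually_lt (by fun_prop) (by fun_prop) (by simp)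
  have hpos : ∀ᶠ t in 𝓝 (0 : ℝ), ∀ x ∈ s,
      0 < (ContinuousLinearMap.id ℝ E + t • fderiv ℝ g x).det := by
    refine hs.eventually_forall_of_forall_eventually fun x _ => ?_
    refine ContinuousAt.eventually_lt (by fun_prop)
      (ContinuousLinearMap.continuous_det.comp (by fun_prop)).continuousAt ?_
    simp [ContinuousLinearMap.det]
  filter_upwards [hsmall, hpos] with t ht hdet
  set h : E → E := fun x => x + t • s.indicator g x with hh
  have hbij : Function.Bijective h := bijective_add_of_lipschitzWith
    (K := ‖t‖₊ * C.toNNReal) ((lipschitzWith_smul t).comp hlip) ht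
  have himage : h '' s = s := by
    have : h '' sᶜ = sᶜ := (image_congr fun x hx => by
      simp [hh, indicator_of_notMem hx]).trans (image_id _)
    rw [← compl_inj_iff, ← image_compl_eq hbij, this]
  have hderiv : ∀ x ∈ s, HasFDerivWithinAt h
      (ContinuousLinearMap.id ℝ E + t • fderiv ℝ g x) s x := fun x hx =>
    ((hasFDerivAt_id x).add ((hg.differentiable one_ne_zero x).hasFDerivAt.const_smul
      t)).hasFDerivWithinAt.congr (fun y hy => by simp [hh, hy]) (by simp [hh, hx])
  calc ∫ x in s, (ContinuousLinearMap.id ℝ E + t • fderiv ℝ g x).det ∂μ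
      = ∫ x in s, |(ContinuousLinearMap.id ℝ E + t • fderiv ℝ g x).det| • (1 : ℝ) ∂μ :=
        setIntegral_congr_fun hs.measurableSet fun x hx => by simp [abs_of_pos (hdet x hx)]
    _ = ∫ _ in h '' s, (1 : ℝ) ∂μ := (integral_image_eq_integral_abs_det_fderiv_smul μ
        hs.measurableSet hderiv hbij.injective.injOn fun _ => 1).symm
    _ = μ.real s := by simp [himage]

open Polynomial in
theorem exists_polynomial_eval_eq_setIntegral_det [IsFiniteMeasureOnCompacts μ]
    (hs : IsCompact s) {A : E → E →L[ℝ] E} (hA : Continuous A) :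
    ∃ p : ℝ[X], ∀ t : ℝ,
      p.eval t = ∫ x in s, (ContinuousLinearMap.id ℝ E + t • A x).det ∂μ := by
  obtain ⟨P, hP⟩ := exists_polynomial_eval_eq_det_id_add_smul hA
  refine ⟨∑ k ∈ P.support, monomial k (∫ x in s, P.coeff k x ∂μ), fun t => ?_⟩
  have hcoeff : ∀ k ∈ P.support, IntegrableOn (fun x => P.coeff k x * t ^ k) s μ := fun k _ =>
    ContinuousOn.integrableOn_compact hs (by fun_prop)
  have heval (x : E) : (ContinuousLinearMap.id ℝ E + t • A x).det =
      ∑ k ∈ P.support, P.coeff k x * t ^ k := by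
    simp [← hP, eval_eq_sum, sum_def]
  simp only [heval, integral_finsetSum _ hcoeff, integral_mul_const, eval_finsetSum, eval_monomial]

theorem setIntegral_det_fderiv_of_eqOn_frontier [μ.IsAddHaarMeasure] (hs : IsCompact s)
    (hconv : Convex ℝ s) {r : E → E} (hr : ContDiff ℝ 1 r) (hid : EqOn r id (frontier s)) :
    ∫ x in s, (fderiv ℝ r x).det ∂μ = μ.real s := by
  set g : E → E := fun x => r x - x
  have hg : ContDiff ℝ 1 g := hr.sub contDiff_id
  have hfderiv (x : E) : ContinuousLinearMap.id ℝ E + fderiv ℝ g x = fderiv ℝ r x := by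
    rw [fderiv_fun_sub (hr.differentiable one_ne_zero x) differentiableAt_fun_id]
    simp
  obtain ⟨p, hp⟩ := exists_polynomial_eval_eq_setIntegral_det (μ := μ) hs
    (hg.continuous_fderiv one_ne_zero)
  have hconst : p = Polynomial.C (μ.real s) := by
    refine Polynomial.eq_of_infinite_eval_eq _ _ (infinite_of_mem_nhds 0 ?_)
    filter_upwards [eventually_setIntegral_det_id_add_smul_fderiv (μ := μ) hs hconv hg
      fun x hx => sub_eq_zero.2 (hid hx)] with t ht
    simp [hp, ht]
  simpa [hp, hfderiv] using congrArg (Polynomial.eval 1) hconst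

end

section

variable {E : Type*} [NormedAddCommGroup E] [InnerProductSpace ℝ E] [FiniteDimensional ℝ E]

theorem det_fderiv_eq_zero_of_norm_eq {r : E → E} {R : ℝ} {x : E} (hR : R ≠ 0)
    (hr : DifferentiableAt ℝ r x) (hnorm : ∀ y, ‖r y‖ = R) : (fderiv ℝ r x).det = 0 := by
  have hperp (u : E) : inner ℝ (r x) (fderiv ℝ r x u) = 0 := by
    have h := hr.hasFDerivAt.norm_sq
    simp only [hnorm] at h
    simpa using (congrArg (· u) (h.unique (hasFDerivAt_const (R ^ 2) x)))
  by_contra hdet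
  have hsurj : Function.Surjective (fderiv ℝ r x) := ((Module.End.isUnit_iff _).1
    ((LinearMap.isUnit_iff_isUnit_det (fderiv ℝ r x : E →ₗ[ℝ] E)).2 (isUnit_iff_ne_zero.2 hdet))).2
  obtain ⟨u, hu⟩ := hsurj (r x)
  have := hperp u
  rw [hu, inner_self_eq_zero, ← norm_eq_zero, hnorm] at this
  exact hR this

theorem not_contDiff_retraction_sphere {r : E → E} {R : ℝ} (hR : 0 < R) (hr : ContDiff ℝ 1 r)
    (hnorm : ∀ x, ‖r x‖ = R) (hid : EqOn r id (sphere 0 R)) : False := by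
  borelize E
  have hvol := setIntegral_det_fderiv_of_eqOn_frontier (μ := volume)
    (isCompact_closedBall (0 : E) R) (convex_closedBall 0 R) hr
    (by rwa [frontier_closedBall (0 : E) hR.ne'])
  have hdet (x : E) : (fderiv ℝ r x).det = 0 :=
    det_fderiv_eq_zero_of_norm_eq hR.ne' (hr.differentiable one_ne_zero x) hnorm
  simp only [hdet, integral_zero] at hvol
  exact (ENNReal.toReal_pos (measure_closedBall_pos volume (0 : E) hR).ne'
    measure_closedBall_lt_top.ne).ne hvol

/-! ### Brouwer's theorem -/

theorem exists_eq_zero_of_eq_self_of_le_norm {G : E → E} {R : ℝ} (hG : Continuous G)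
    (hid : ∀ x, R ≤ ‖x‖ → G x = x) : ∃ x, G x = 0 := by
  by_contra! hG0
  have hR : R < |R| + 1 := by linarith [le_abs_self R]
  have hR0 : 0 < |R| + 1 := by positivity
  obtain ⟨g, hg, hgG, hgeq, -⟩ := hG.exists_contDiff_approx_and_eqOn 1 hG.norm
    (fun x => norm_pos_iff.2 (hG0 x)) (S := {x | |R| + 1 ≤ ‖x‖}) (U := {x | R < ‖x‖})
    (isClosed_le continuous_const continuous_norm)
    ((isOpen_lt continuous_const continuous_norm).mem_nhdsSet.2 fun x hx => hR.trans_le hx)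
    (contDiffOn_id.congr fun x hx => hid x (le_of_lt hx))
  have hg0 (x : E) : g x ≠ 0 := fun h => by simpa [h] using hgG x
  refine not_contDiff_retraction_sphere hR0 (r := fun x => ((|R| + 1) / ‖g x‖) • g x)
    ((contDiff_const.div (hg.norm ℝ hg0) fun x => norm_ne_zero_iff.2 (hg0 x)).smul hg) ?_ ?_
  · intro x
    rw [norm_smul, norm_div, norm_norm, div_mul_cancel₀ _ (norm_ne_zero_iff.2 (hg0 x)),
      Real.norm_of_nonneg hR0.le]
  · intro x hx
    have hxR : ‖x‖ = |R| + 1 := mem_sphere_zero_iff_norm.1 hx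
    have hgx : g x = x := (hgeq hxR.ge).trans (hid x (hR.le.trans hxR.ge))
    simp [hgx, hxR, hR0.ne']

theorem exists_eq_zero_of_forall_sphere_ne_neg_smul {h : E → E}
    (hh : ContinuousOn h (closedBall 0 1))
    (hsphere : ∀ x ∈ sphere (0 : E) 1, ∀ k : ℝ, 0 < k → h x ≠ -(k • x)) :
    ∃ x ∈ closedBall (0 : E) 1, h x = 0 := by
  -- Outside the ball, `h` at the radial projection is deformed to the identity.
  let m : E → ℝ := fun x => max 1 ‖x‖
  let θ : E → ℝ := fun x => min 1 (m x - 1)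
  have hm : Continuous m := by fun_prop
  have hm0 (x : E) : 0 < m x := lt_max_of_lt_left one_pos
  have hradial (x : E) : (m x)⁻¹ • x ∈ closedBall (0 : E) 1 := by
    rw [mem_closedBall_zero_iff, norm_smul, norm_inv, Real.norm_of_nonneg (hm0 x).le]
    exact inv_mul_le_one_of_le₀ (le_max_right _ _) (hm0 x).le
  obtain ⟨x, hx⟩ : ∃ x, (1 - θ x) • h ((m x)⁻¹ • x) + θ x • x = 0 :=
    exists_eq_zero_of_eq_self_of_le_norm (R := 2)
    (((by fun_prop : Continuous fun x => 1 - θ x).smul (hh.comp_continuous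
      ((hm.inv₀ fun x => (hm0 x).ne').smul continuous_id) hradial)).add (by fun_prop))
    fun x hx => by
      have hθ : θ x = 1 := min_eq_left (by linarith [le_max_right 1 ‖x‖])
      simp [hθ]
  rcases le_or_gt ‖x‖ 1 with hx1 | hx1
  · have hmx : m x = 1 := max_eq_left hx1
    have hθ : θ x = 0 := by simp [θ, hmx]
    exact ⟨x, mem_closedBall_zero_iff.2 hx1, by simpa [hmx, hθ] using hx⟩
  have hx0 : x ≠ 0 := norm_pos_iff.1 (one_pos.trans hx1)
  have hmx : m x = ‖x‖ := max_eq_right hx1.le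
  have hθ0 : 0 < θ x := lt_min one_pos (by linarith)
  have hθ1 : 0 < 1 - θ x := by
    refine sub_pos.2 ((min_le_left _ _).lt_of_ne fun (hθ : θ x = 1) => hx0 ?_)
    simpa [hθ] using hx
  refine absurd ?_ (hsphere ((m x)⁻¹ • x) (by simp [hmx, norm_smul, hx0])
    ((1 - θ x)⁻¹ * θ x * m x) (by have := hm0 x; positivity))
  rw [smul_smul, mul_inv_cancel_right₀ (hm0 x).ne', mul_smul, ← smul_neg, eq_inv_smul_iff₀ hθ1.ne']
  exact eq_neg_of_add_eq_zero_left hx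

theorem exists_eq_zero_of_dist_le_one {h : E → E} (hh : ContinuousOn h (closedBall 0 1))
    (hdist : ∀ x ∈ sphere (0 : E) 1, dist (h x) x ≤ 1) : ∃ x ∈ closedBall (0 : E) 1, h x = 0 := by
  refine exists_eq_zero_of_forall_sphere_ne_neg_smul hh fun x hx k hk hhx => ?_
  have hdist := hdist x hx
  rw [hhx, dist_eq_norm, show -(k • x) - x = -((k + 1) • x) by module, norm_neg, norm_smul,
    mem_sphere_zero_iff_norm.1 hx, Real.norm_of_nonneg (by positivity)] at hdist
  linarith

/-! ### Invariance of domain -/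

section

variable {E : Type*} [NormedAddCommGroup E] [NormedSpace ℝ E]

/-- The radial map which moves the points of `ball c ε` other than the centre `c` onto the bounding
sphere and fixes all points outside the ball. -/
def pushOut (c : E) (ε : ℝ) (y : E) : E :=
  c + max (ε / ‖y - c‖) 1 • (y - c)

theorem continuousOn_pushOut (c : E) (ε : ℝ) : ContinuousOn (pushOut c ε) {c}ᶜ := by
  have hdiv : ContinuousOn (fun y : E => ε / ‖y - c‖) {c}ᶜ :=
    continuousOn_const.div (by fun_prop) fun y hy => norm_ne_zero_iff.2 (sub_ne_zero.2 hy)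
  exact continuousOn_const.add ((hdiv.sup continuousOn_const).smul (by fun_prop))

theorem pushOut_of_le {c y : E} {ε : ℝ} (h : ε ≤ ‖y - c‖) : pushOut c ε y = y := by
  rw [pushOut, max_eq_right (div_le_one_of_le₀ h (norm_nonneg _)), one_smul, add_sub_cancel]

theorem pushOut_mem_sphere {c y : E} {ε : ℝ} (hyc : y ≠ c) (h : ‖y - c‖ ≤ ε) :
    pushOut c ε y ∈ sphere c ε := by
  have hpos : 0 < ‖y - c‖ := norm_pos_iff.2 (sub_ne_zero.2 hyc)
  rw [mem_sphere_iff_norm, pushOut, add_sub_cancel_left, max_eq_left ((one_le_div hpos).2 h),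
    norm_smul, Real.norm_of_nonneg (div_nonneg (hpos.le.trans h) hpos.le),
    div_mul_cancel₀ _ hpos.ne']

variable [FiniteDimensional ℝ E]

theorem exists_continuous_approx_forall_ne_zero [MeasurableSpace E] [BorelSpace E]
    (μ : Measure E) [μ.IsAddHaarMeasure] {g : E → E} (hg : Continuous g) {S : Set E}
    (hS : μ S = 0) {δ : ℝ} (hδ : 0 < δ) :
    ∃ Q : E → E, Continuous Q ∧ (∀ y, dist (Q y) (g y) < δ) ∧ ∀ y ∈ S, Q y ≠ 0 := by
  obtain ⟨P, hP, hPg, -⟩ := hg.exists_contDiff_approx 1 (ε := fun _ => δ / 2)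
    continuous_const fun _ => half_pos hδ
  -- The image of `S` under `P` is null, so it misses some small `a`.
  have hnull : μ (P '' S) = 0 := addHaar_image_eq_zero_of_differentiableOn_of_addHaar_eq_zero μ
    (hP.differentiable one_ne_zero).differentiableOn hS
  obtain ⟨a, ha, haP⟩ : ∃ a ∈ ball (0 : E) (δ / 2), a ∉ P '' S :=
    not_subset.1 fun h => (measure_ball_pos μ 0 (half_pos hδ)).ne' (measure_mono_null h hnull)
  refine ⟨fun y => P y - a, hP.continuous.sub continuous_const, fun y => ?_, fun y hy h =>
    haP ⟨y, hy, sub_eq_zero.1 h⟩⟩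
  calc dist (P y - a) (g y) ≤ dist (P y - a) (P y) + dist (P y) (g y) := dist_triangle _ _ _
    _ < δ / 2 + δ / 2 := add_lt_add (by simpa [dist_eq_norm] using ha) (hPg y)
    _ = δ := add_halves δ

theorem exists_continuousOn_approx_forall_ne_zero {g : E → E} (hg : Continuous g) {X : Set E}
    (hX : IsCompact X) {c : E} (hc : c ∉ X) {ε ρ : ℝ} (hε : 0 < ε) (hρ : 0 < ρ)
    (hfar : ∀ y ∈ X, ε ≤ ‖y - c‖ → g y ≠ 0) (hnear : ∀ y ∈ closedBall c ε, ‖g y‖ ≤ ρ) :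
    ∃ h : E → E, ContinuousOn h X ∧ (∀ y ∈ X, h y ≠ 0) ∧ ∀ y ∈ X, dist (h y) (g y) ≤ 3 * ρ := by
  borelize E
  obtain ⟨η, hη, hgη⟩ : ∃ η, 0 < η ∧ ∀ y ∈ X ∩ {y | ε ≤ ‖y - c‖}, η ≤ ‖g y‖ :=
    (hX.inter_right (isClosed_le (by fun_prop) (by fun_prop))).exists_forall_le' (by fun_prop)
      fun y hy => norm_pos_iff.2 (hfar y hy.1 hy.2)
  obtain ⟨Q, hQ, hQg, hQ0⟩ := exists_continuous_approx_forall_ne_zero Measure.addHaar hg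
    (Measure.addHaar_sphere_of_ne_zero _ c hε.ne') (lt_min hη hρ)
  have hXc : ∀ y ∈ X, y ≠ c := fun y hy h => hc (h ▸ hy)
  refine ⟨Q ∘ pushOut c ε, hQ.comp_continuousOn ((continuousOn_pushOut c ε).mono hXc), ?_, ?_⟩
  · intro y hy
    rcases le_or_gt ε ‖y - c‖ with h | h
    · rw [Function.comp_apply, pushOut_of_le h]
      intro hQy
      have := (hQg y).trans_le (min_le_left _ _)
      rw [hQy, dist_zero_left] at this
      exact this.not_ge (hgη y ⟨hy, h⟩)
    · exact hQ0 _ (pushOut_mem_sphere (hXc y hy) h.le)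
  · intro y hy
    have hQρ (z : E) : dist (Q z) (g z) ≤ ρ := (hQg z).le.trans (min_le_right _ _)
    rcases le_or_gt ε ‖y - c‖ with h | h
    · rw [Function.comp_apply, pushOut_of_le h]
      linarith [hQρ y]
    · set z := pushOut c ε y
      have hz : ‖g z‖ ≤ ρ := hnear z (sphere_subset_closedBall (pushOut_mem_sphere (hXc y hy) h.le))
      have hy : ‖g y‖ ≤ ρ := hnear y (mem_closedBall_iff_norm.2 h.le)
      calc dist (Q z) (g y) ≤ dist (Q z) (g z) + dist (g z) (g y) := dist_triangle _ _ _
        _ ≤ ρ + (ρ + ρ) := add_le_add (hQρ z) ((dist_le_norm_add_norm _ _).trans (by gcongr))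
        _ = 3 * ρ := by ring

end

theorem image_closedBall_mem_nhds_of_injOn {f : E → E} (hf : ContinuousOn f (closedBall 0 1))
    (hinj : InjOn f (closedBall 0 1)) : f '' closedBall 0 1 ∈ 𝓝 (f 0) := by
  by_contra hnot
  have hK : IsCompact (closedBall (0 : E) 1) := isCompact_closedBall 0 1
  have : CompactSpace (closedBall (0 : E) 1) := isCompact_iff_compactSpace.1 hK
  obtain ⟨g, hg⟩ := ContinuousMap.exists_extension' (Continuous.isClosedEmbedding
    (continuousOn_iff_continuous_domRestrict.1 hf) (injOn_iff_injective.1 hinj))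
    (⟨Subtype.val, continuous_subtype_val⟩ : C(closedBall (0 : E) 1, E))
  have hgf : ∀ x ∈ closedBall (0 : E) 1, g (f x) = x := fun x hx => congrFun hg ⟨x, hx⟩
  have hg0 : g (f 0) = 0 := hgf 0 (by simp)
  obtain ⟨ε, hε, hgε⟩ : ∃ ε > 0, ∀ y ∈ ball (f 0) ε, ‖g y‖ < 1 / 3 :=
    Metric.eventually_nhds_iff_ball.1
      (g.continuous.norm.continuousAt.eventually_lt continuousAt_const (by simp [hg0]))
  obtain ⟨c, hc, hcK⟩ : ∃ c ∈ ball (f 0) (ε / 2), c ∉ f '' closedBall 0 1 :=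
    not_subset.1 fun h => hnot (mem_of_superset (ball_mem_nhds _ (half_pos hε)) h)
  have hsub : closedBall c (ε / 2) ⊆ ball (f 0) ε :=
    closedBall_subset_ball' (by linarith [mem_ball.1 hc])
  have hfar : ∀ y ∈ f '' closedBall 0 1, ε / 2 ≤ ‖y - c‖ → g y ≠ 0 := by
    rintro _ ⟨x, hx, rfl⟩ hxc hgx
    rw [hgf x hx] at hgx
    rw [hgx, norm_sub_rev] at hxc
    exact hxc.not_gt (mem_ball_iff_norm.1 hc)
  obtain ⟨h, hh, hh0, hhg⟩ := exists_continuousOn_approx_forall_ne_zero g.continuous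
    (hK.image_of_continuousOn hf) hcK (half_pos hε) (ρ := 1 / 3) (by norm_num) hfar
    fun y hy => (hgε y (hsub hy)).le
  obtain ⟨x, hx, hhx⟩ := exists_eq_zero_of_dist_le_one (hh.comp hf (mapsTo_image _ _))
    fun x hx => by
      have hx := sphere_subset_closedBall hx
      simpa [hgf x hx] using hhg _ (mem_image_of_mem f hx)
  exact hh0 _ (mem_image_of_mem f hx) hhx

theorem isOpen_image_of_injOn {f : E → E} {U : Set E} (hU : IsOpen U) (hf : ContinuousOn f U)
    (hinj : InjOn f U) : IsOpen (f '' U) := by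
  rw [isOpen_iff_mem_nhds]
  rintro _ ⟨x, hx, rfl⟩
  obtain ⟨r, hr, hrU⟩ := nhds_basis_closedBall.mem_iff.1 (hU.mem_nhds hx)
  have hmaps : MapsTo (fun z => x + r • z) (closedBall 0 1) U := fun z hz => hrU (by
    simpa [norm_smul, abs_of_pos hr] using
      mul_le_of_le_one_right hr.le (mem_closedBall_zero_iff.1 hz))
  have hnhds := image_closedBall_mem_nhds_of_injOn (hf.comp (by fun_prop) hmaps)
    (hinj.comp (fun a _ b _ h => by simpa [hr.ne'] using h) hmaps)
  simp only [Function.comp_apply, smul_zero, add_zero] at hnhds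
  refine mem_of_superset hnhds ?_
  rintro _ ⟨z, hz, rfl⟩
  exact mem_image_of_mem f (hmaps hz)

section

variable {M : Type*} [TopologicalSpace M]

/-- Around each of its points `M` admits a continuous injection into `E`, as every topological
manifold with or without boundary modelled on `E` does. The local injections are recorded as maps
defined on all of `M`. -/
def LocallyInjectsInto (E M : Type*) [TopologicalSpace E] [TopologicalSpace M] : Prop :=
  ∀ x : M, ∃ U ∈ 𝓝 x, ∃ ψ : M → E, ContinuousOn ψ U ∧ InjOn ψ U

theorem LocallyInjectsInto.isOpenEmbedding (hM : LocallyInjectsInto E M) {e : E → M}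
    (he : Continuous e) (hinj : Function.Injective e) : IsOpenEmbedding e := by
  refine .of_continuous_injective_isOpenMap he hinj fun V hV => isOpen_iff_mem_nhds.2 ?_
  rintro _ ⟨y, hy, rfl⟩
  obtain ⟨U, hU, ψ, hψ, hψinj⟩ := hM (e y)
  have hmaps : MapsTo e (V ∩ e ⁻¹' interior U) U := fun z hz => interior_subset hz.2
  have hopen : IsOpen ((ψ ∘ e) '' (V ∩ e ⁻¹' interior U)) :=
    isOpen_image_of_injOn (hV.inter (isOpen_interior.preimage he)) (hψ.comp he.continuousOn hmaps)
      (hψinj.comp hinj.injOn hmaps)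
  filter_upwards [hU, (hψ.continuousAt hU).preimage_mem_nhds
    (hopen.mem_nhds ⟨y, ⟨hy, mem_interior_iff_mem_nhds.2 hU⟩, rfl⟩)] with m hmU hm
  obtain ⟨z, hz, hzm⟩ := hm
  exact ⟨z, hz.1, hψinj (hmaps hz) hmU hzm⟩

theorem continuousOn_extend_val {X Y : Type*} [TopologicalSpace X] [TopologicalSpace Y] {s : Set X}
    {f : s → Y} (hf : Continuous f) (g : X → Y) :
    ContinuousOn (Function.extend Subtype.val f g) s :=
  continuousOn_iff_continuous_domRestrict.2
    (hf.congr fun x => (Subtype.val_injective.extend_apply f g x).symm)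

theorem LocallyHalfSpace.locallyInjectsInto {n : ℕ} {hn : 1 ≤ n} {M : Type} [TopologicalSpace M]
    (hM : LocallyHalfSpace hn M) : LocallyInjectsInto (EuclideanSpace ℝ (Fin n)) M := by
  intro x
  obtain ⟨U, V, hx, hU, -, ⟨h⟩⟩ := hM x
  let ψ : U → EuclideanSpace ℝ (Fin n) := fun u => ((h u : HalfSpace hn) : EuclideanSpace ℝ (Fin n))
  have hψ (u : U) : Function.extend Subtype.val ψ 0 u = ψ u :=
    Subtype.val_injective.extend_apply ψ 0 u
  refine ⟨U, hU.mem_nhds hx, Function.extend Subtype.val ψ 0, continuousOn_extend_val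
    (continuous_subtype_val.comp (continuous_subtype_val.comp h.continuous)) 0,
    fun u hu v hv huv => ?_⟩
  have hψuv : ψ ⟨u, hu⟩ = ψ ⟨v, hv⟩ := (hψ _).symm.trans (huv.trans (hψ ⟨v, hv⟩))
  exact congrArg Subtype.val (h.injective (Subtype.val_injective (Subtype.val_injective hψuv)))

end

end

/-! ### Absolute extensors -/

section

open Classical in
theorem exists_continuousOn_union {X Y : Type*} [TopologicalSpace X] [TopologicalSpace Y]
    {s t : Set X} (hs : IsClosed s) (ht : IsClosed t) {f g : X → Y} (hf : ContinuousOn f s)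
    (hg : ContinuousOn g t) (hfg : EqOn f g (s ∩ t)) :
    ∃ F : X → Y, ContinuousOn F (s ∪ t) ∧ EqOn F f s ∧ EqOn F g t := by
  have hFs : EqOn (s.piecewise f g) f s := piecewise_eqOn s f g
  have hFt : EqOn (s.piecewise f g) g t := fun x hx => by
    by_cases hxs : x ∈ s
    · exact (hFs hxs).trans (hfg ⟨hxs, hx⟩)
    · exact piecewise_eq_of_notMem s f g hxs
  exact ⟨_, (hf.congr hFs).union_of_isClosed (hg.congr hFt) hs ht, hFs, hFt⟩

theorem exists_isClosed_cover_separating {X : Type*} [PseudoEMetricSpace X] {K L : Set X}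
    (hK : IsClosed K) (hL : IsClosed L) :
    ∃ P Q : Set X, IsClosed P ∧ IsClosed Q ∧ P ∪ Q = univ ∧ K ⊆ P ∧ L ⊆ Q ∧
      P ∩ L ⊆ K ∧ Q ∩ K ⊆ L := by
  have hsub {S T : Set X} : S ⊆ {x | infEDist x S ≤ infEDist x T} := fun x hx => by
    simp [infEDist_zero_of_mem hx]
  have hsep {S T : Set X} (hS : IsClosed S) : {x | infEDist x S ≤ infEDist x T} ∩ T ⊆ S := by
    rintro x ⟨hx, hxT⟩
    rw [mem_iff_infEDist_zero_of_closed hS, ← nonpos_iff_eq_zero, ← infEDist_zero_of_mem hxT]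
    exact hx
  exact ⟨_, _, isClosed_le continuous_infEDist continuous_infEDist,
    isClosed_le continuous_infEDist continuous_infEDist,
    eq_univ_of_forall fun x => le_total (infEDist x K) (infEDist x L), hsub, hsub, hsep hK, hsep hL⟩

/-- `S` is an absolute extensor for metric spaces: continuous maps into `S` from a closed subset of
a metric space extend to the whole space. Maps into `S` are encoded as maps into the ambient space
with values in `S`, and the metric spaces range over a fixed universe `u`. -/
def IsAbsoluteExtensor.{u, v} {M : Type v} [TopologicalSpace M] (S : Set M) : Prop :=
  ∀ (X : Type u) [MetricSpace X] (K : Set X), IsClosed K → ∀ f : X → M, ContinuousOn f K →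
    MapsTo f K S → ∃ F : X → M, Continuous F ∧ (∀ x, F x ∈ S) ∧ EqOn F f K

namespace IsAbsoluteExtensor

universe u

variable {M : Type*} [TopologicalSpace M]

theorem exists_extension_union {S : Set M} (hS : IsAbsoluteExtensor.{u} S) {X : Type u}
    [MetricSpace X] {K L : Set X} (hK : IsClosed K) (hL : IsClosed L) {f g : X → M}
    (hf : ContinuousOn f K) (hg : ContinuousOn g L) (hfg : EqOn f g (K ∩ L))
    (hfS : MapsTo f K S) (hgS : MapsTo g L S) :
    ∃ F : X → M, Continuous F ∧ (∀ x, F x ∈ S) ∧ EqOn F f K ∧ EqOn F g L := by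
  obtain ⟨G, hG, hGf, hGg⟩ := exists_continuousOn_union hK hL hf hg hfg
  obtain ⟨F, hF, hFS, hFG⟩ := hS X (K ∪ L) (hK.union hL) G hG
    (MapsTo.union (hfS.congr hGf.symm) (hgS.congr hGg.symm))
  exact ⟨F, hF, hFS, (hFG.mono subset_union_left).trans hGf,
    (hFG.mono subset_union_right).trans hGg⟩

theorem union {A B T : Set M} (hA : IsClosed A) (hB : IsClosed B)
    (hAT : IsAbsoluteExtensor.{u} (A ∩ T)) (hBT : IsAbsoluteExtensor.{u} (B ∩ T))
    (hABT : IsAbsoluteExtensor.{u} (A ∩ B ∩ T)) :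
    IsAbsoluteExtensor.{u} ((A ∪ B) ∩ T) := by
  intro X _ K hK f hf hfS
  have hKA : IsClosed (K ∩ f ⁻¹' A) := hf.preimage_isClosed_of_isClosed hK hA
  have hKB : IsClosed (K ∩ f ⁻¹' B) := hf.preimage_isClosed_of_isClosed hK hB
  obtain ⟨P, Q, hP, hQ, hPQ, hKP, hKQ, hPK, hQK⟩ := exists_isClosed_cover_separating hKA hKB
  have hPA : P ∩ K ⊆ K ∩ f ⁻¹' A := fun x hx => (hfS hx.2).1.elim (fun h => ⟨hx.2, h⟩)
    fun h => hPK ⟨hx.1, hx.2, h⟩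
  have hQB : Q ∩ K ⊆ K ∩ f ⁻¹' B := fun x hx => (hfS hx.2).1.elim (fun h => hQK ⟨hx.1, hx.2, h⟩)
    fun h => ⟨hx.2, h⟩
  -- Extend `f` to the separator `P ∩ Q`, with values in `A ∩ B`, and then to each of its sides.
  obtain ⟨G, hG, hGS, hGf⟩ := hABT X (P ∩ Q ∩ K) ((hP.inter hQ).inter hK) f
    (hf.mono inter_subset_right) fun x hx =>
      ⟨⟨(hPA ⟨hx.1.1, hx.2⟩).2, (hQB ⟨hx.1.2, hx.2⟩).2⟩, (hfS hx.2).2⟩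
  obtain ⟨FA, hFA, hFAS, hFAf, hFAG⟩ := hAT.exists_extension_union hKA (hP.inter hQ)
    (hf.mono inter_subset_left) hG.continuousOn (fun x hx => (hGf ⟨hx.2, hx.1.1⟩).symm)
    (fun x hx => ⟨hx.2, (hfS hx.1).2⟩) fun x _ => ⟨(hGS x).1.1, (hGS x).2⟩
  obtain ⟨FB, hFB, hFBS, hFBf, hFBG⟩ := hBT.exists_extension_union hKB (hP.inter hQ)
    (hf.mono inter_subset_left) hG.continuousOn (fun x hx => (hGf ⟨hx.2, hx.1.1⟩).symm)
    (fun x hx => ⟨hx.2, (hfS hx.1).2⟩) fun x _ => ⟨(hGS x).1.2, (hGS x).2⟩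
  obtain ⟨F, hF, hFP, hFQ⟩ := exists_continuousOn_union hP hQ hFA.continuousOn hFB.continuousOn
    (hFAG.trans hFBG.symm)
  rw [hPQ, continuousOn_univ] at hF
  refine ⟨F, hF, fun x => ?_, fun x hx => ?_⟩
  · rcases hPQ.ge (mem_univ x) with h | h
    · rw [hFP h]
      exact ⟨Or.inl (hFAS x).1, (hFAS x).2⟩
    · rw [hFQ h]
      exact ⟨Or.inr (hFBS x).1, (hFBS x).2⟩
  · rcases (hfS hx).1 with h | h
    · rw [hFP (hKP ⟨hx, h⟩), hFAf ⟨hx, h⟩]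
    · rw [hFQ (hKQ ⟨hx, h⟩), hFBf ⟨hx, h⟩]

end IsAbsoluteExtensor

variable {E : Type*} [NormedAddCommGroup E] [NormedSpace ℝ E] [FiniteDimensional ℝ E]

theorem exists_extension_closedBall_norm_lt {X : Type*} [PseudoMetricSpace X] {K : Set X}
    (hK : IsClosed K) {f : X → E} (hf : ContinuousOn f K) (hf1 : ∀ x ∈ K, ‖f x‖ ≤ 1) :
    ∃ G : X → E, Continuous G ∧ EqOn G f K ∧ (∀ x, ‖G x‖ ≤ 1) ∧ ∀ x ∉ K, ‖G x‖ < 1 := by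
  rcases K.eq_empty_or_nonempty with rfl | hne
  · exact ⟨0, continuous_zero, eqOn_empty _ _, by simp, by simp⟩
  have := Metric.instTietzeExtensionClosedBall ℝ (0 : E) one_pos
  obtain ⟨g, hg1, hgf⟩ := ContinuousMap.exists_forall_mem_restrict_eq hK
    (f := ⟨K.domRestrict f, continuousOn_iff_continuous_domRestrict.1 hf⟩)
    (t := closedBall 0 1) fun x => mem_closedBall_zero_iff.2 (hf1 x x.2)
  have hg1 (x : X) : ‖g x‖ ≤ 1 := mem_closedBall_zero_iff.1 (hg1 x)
  have hd (x : X) : 0 < 1 + infDist x K := by linarith [infDist_nonneg (x := x) (s := K)]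
  have hnorm (x : X) : ‖(1 + infDist x K)⁻¹ • g x‖ = (1 + infDist x K)⁻¹ * ‖g x‖ := by
    rw [norm_smul, norm_inv, Real.norm_of_nonneg (hd x).le]
  refine ⟨fun x => (1 + infDist x K)⁻¹ • g x,
    ((continuous_const.add (continuous_infDist_pt K)).inv₀ fun x => (hd x).ne').smul g.continuous,
    fun x hx => ?_, fun x => ?_, fun x hx => ?_⟩
  · simpa [infDist_zero_of_mem hx] using DFunLike.congr_fun hgf ⟨x, hx⟩
  · rw [hnorm]
    exact inv_mul_le_one_of_le₀ ((hg1 x).trans (by simp [infDist_nonneg])) (hd x).le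
  · rw [hnorm, inv_mul_lt_one₀ (hd x)]
    linarith [hg1 x, (hK.notMem_iff_infDist_pos hne).1 hx]

theorem isAbsoluteExtensor_inter_of_homeomorph_closedBall.{u} {M : Type*} [TopologicalSpace M]
    {S T : Set M} (h : S ≃ₜ closedBall (0 : E) 1) (hT : ∀ y : S, ‖(h y : E)‖ < 1 → (y : M) ∈ T) :
    IsAbsoluteExtensor.{u} (S ∩ T) := by
  intro X _ K hK f hf hfS
  let ψ : M → E := Function.extend Subtype.val (fun y => (h y : E)) 0
  have hψ : ∀ m (hm : m ∈ S), ψ m = h ⟨m, hm⟩ := fun m hm =>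
    Subtype.val_injective.extend_apply _ _ (⟨m, hm⟩ : S)
  have hψS : ContinuousOn ψ S :=
    continuousOn_extend_val (continuous_subtype_val.comp h.continuous) 0
  have hfS' : MapsTo f K S := fun x hx => (hfS hx).1
  -- Off `K` the extension stays inside the open ball, whose points all belong to `T`.
  obtain ⟨G, hG, hGf, hG1, hGlt⟩ := exists_extension_closedBall_norm_lt hK (hψS.comp hf hfS')
    fun x hx => by
      rw [Function.comp_apply, hψ _ (hfS' hx)]
      exact mem_closedBall_zero_iff.1 (h _).2
  have hGball (x : X) : G x ∈ closedBall (0 : E) 1 := mem_closedBall_zero_iff.2 (hG1 x)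
  have hFf : ∀ x ∈ K, (h.symm ⟨G x, hGball x⟩ : M) = f x := fun x hx => by
    have hsymm : h.symm ⟨G x, hGball x⟩ = ⟨f x, hfS' hx⟩ :=
      h.symm_apply_eq.2 (Subtype.ext ((hGf hx).trans (hψ _ (hfS' hx))))
    rw [hsymm]
  refine ⟨fun x => h.symm ⟨G x, hGball x⟩,
    continuous_subtype_val.comp (h.symm.continuous.comp (hG.subtype_mk hGball)),
    fun x => ⟨Subtype.coe_prop _, ?_⟩, hFf⟩
  by_cases hx : x ∈ K
  · simpa only [hFf x hx] using (hfS hx).2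
  · exact hT _ (by simpa using hGlt x hx)

end

/-! ### The degree obstruction -/

section

theorem continuous_extend_const_of_isCompact {X Y M : Type*} [TopologicalSpace X]
    [TopologicalSpace Y] [TopologicalSpace M] [T2Space M] {φ : X → M} (hφ : IsOpenEmbedding φ)
    {K : Set X} (hK : IsCompact K) {Q : X → Y} (hQ : Continuous Q) {w : Y}
    (hQw : ∀ x ∉ K, Q x = w) : Continuous (Function.extend φ Q fun _ => w) := by
  refine continuous_iff_continuousAt.2 fun m => ?_
  by_cases hm : m ∈ range φ
  · obtain ⟨x, rfl⟩ := hm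
    have hφQ : Function.extend φ Q (fun _ => w) ∘ φ = Q := funext (hφ.injective.extend_apply Q _)
    rw [← hφ.continuousAt_iff, hφQ]
    exact hQ.continuousAt
  · have hmK : m ∉ φ '' K := fun h => hm (image_subset_range φ K h)
    have hfar : Function.extend φ Q (fun _ => w) =ᶠ[𝓝 m] fun _ => w := by
      filter_upwards [(hK.image hφ.continuous).isClosed.isOpen_compl.mem_nhds hmK] with p hp
      by_cases hpφ : p ∈ range φ
      · obtain ⟨x, rfl⟩ := hpφ
        rw [hφ.injective.extend_apply]
        exact hQw x fun hx => hp (mem_image_of_mem φ hx)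
      · exact Function.extend_apply' _ _ _ hpφ
    exact continuousAt_const.congr hfar.symm

universe u

variable {E : Type u} [NormedAddCommGroup E] {M : Type*} [TopologicalSpace M]

theorem exists_continuous_collapse [NormedSpace ℝ E] [FiniteDimensional ℝ E] [T2Space M] {φ : E → M}
    (hφ : IsOpenEmbedding φ) {ε : ℝ} (hε : 0 < ε) :
    ∃ q : M → WithLp 2 (E × ℝ), Continuous q ∧ (∀ m, q m ≠ 0) ∧
      (∀ y, ∃ c : ℝ, 0 ≤ c ∧ (q (φ y)).fst = c • y) ∧ 0 < (q (φ 0)).snd ∧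
      ∀ m ∉ φ '' ball 0 ε, (q m).snd < 0 := by
  -- Up to positive scaling, the degree-one map onto the unit sphere that collapses the complement
  -- of the disc to the south pole.
  let c : E → ℝ := fun y => max 0 (1 - ‖y‖ / ε)
  have hc : Continuous c := by fun_prop
  have hc0 : c 0 = 1 := by simp [c]
  have hcfar : ∀ y ∉ ball (0 : E) ε, c y = 0 := fun y hy => by
    have : 1 ≤ ‖y‖ / ε := (one_le_div hε).2 (by simpa using hy)
    exact max_eq_left (by linarith)
  let Q : E → WithLp 2 (E × ℝ) := fun y => WithLp.toLp 2 (c y • y, 2 * c y - 1)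
  have hQ : Continuous Q := (WithLp.prod_continuous_toLp 2 E ℝ).comp (by fun_prop)
  let w : WithLp 2 (E × ℝ) := WithLp.toLp 2 (0, -1)
  have hQw : ∀ y ∉ ball (0 : E) ε, Q y = w := fun y hy => by simp [Q, w, hcfar y hy]
  let q : M → WithLp 2 (E × ℝ) := Function.extend φ Q fun _ => w
  have hqφ (y : E) : q (φ y) = Q y := hφ.injective.extend_apply _ _ _
  have hqw : ∀ m ∉ φ '' ball 0 ε, q m = w := fun m hm => by
    by_cases hmφ : m ∈ range φ
    · obtain ⟨y, rfl⟩ := hmφ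
      exact (hqφ y).trans (hQw y fun hy => hm (mem_image_of_mem φ hy))
    · exact Function.extend_apply' _ _ _ hmφ
  refine ⟨q, continuous_extend_const_of_isCompact hφ (isCompact_closedBall 0 ε) hQ fun y hy =>
    hQw y fun h => hy (ball_subset_closedBall h), fun m hm => ?_,
    fun y => ⟨c y, le_max_left _ _, congrArg WithLp.fst (hqφ y)⟩, by norm_num [hqφ, Q, hc0],
    fun m hm => by simp [hqw m hm, w]⟩
  by_cases hmε : m ∈ φ '' ball 0 ε
  · obtain ⟨y, -, rfl⟩ := hmε
    rw [hqφ] at hm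
    have hfst : c y • y = 0 := congrArg WithLp.fst hm
    have hsnd : 2 * c y - 1 = 0 := congrArg WithLp.snd hm
    rcases smul_eq_zero.1 hfst with h | rfl
    · linarith
    · linarith
  · have hsnd : (-1 : ℝ) = 0 := congrArg WithLp.snd ((hqw m hmε).symm.trans hm)
    linarith

theorem exists_continuousOn_sphere_of_eqOn_sphere {f g : E → M} (hf : Continuous f)
    (hg : Continuous g) (hfg : EqOn f g (sphere 0 1)) :
    ∃ F : WithLp 2 (E × ℝ) → M, ContinuousOn F (sphere 0 1) ∧
      (∀ z ∈ sphere 0 1, 0 ≤ z.snd → F z = f z.fst) ∧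
      ∀ z ∈ sphere 0 1, z.snd ≤ 0 → F z = g z.fst := by
  have hfst : Continuous fun z : WithLp 2 (E × ℝ) => z.fst := WithLp.continuous_fst ..
  have hsnd : Continuous fun z : WithLp 2 (E × ℝ) => z.snd := WithLp.continuous_snd ..
  have hupper : IsClosed {z : WithLp 2 (E × ℝ) | 0 ≤ z.snd} := isClosed_le continuous_const hsnd
  have hlower : IsClosed {z : WithLp 2 (E × ℝ) | z.snd ≤ 0} := isClosed_le hsnd continuous_const
  obtain ⟨F, hF, hFf, hFg⟩ := exists_continuousOn_union
    (isClosed_sphere.inter hupper) (isClosed_sphere.inter hlower)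
    (hf.comp hfst).continuousOn (hg.comp hfst).continuousOn fun z hz => hfg <| by
      have hz0 : z.snd = 0 := le_antisymm hz.2.2 hz.1.2
      have hz1 : ‖z‖ = 1 := mem_sphere_zero_iff_norm.1 hz.1.1
      have hnorm := WithLp.prod_norm_sq_eq_of_L2 z
      rw [hz0, hz1, norm_zero, one_pow, zero_pow two_ne_zero, add_zero] at hnorm
      rwa [mem_sphere_zero_iff_norm, ← pow_eq_one_iff_of_nonneg (norm_nonneg _) two_ne_zero,
        eq_comm]
  refine ⟨F, hF.mono fun z hz => (le_total 0 z.snd).imp (And.intro hz) (And.intro hz),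
    fun z hz h => hFf ⟨hz, h⟩, fun z hz h => hFg ⟨hz, h⟩⟩

theorem not_isAbsoluteExtensor_compl_singleton [InnerProductSpace ℝ E] [FiniteDimensional ℝ E]
    [T2Space M] {φ : E → M} (hφ : IsOpenEmbedding φ)
    (hM : IsAbsoluteExtensor.{u} (univ : Set M)) :
    ¬ IsAbsoluteExtensor.{u} ({φ 0}ᶜ : Set M) := by
  intro hM0
  have hφ1 : MapsTo φ (sphere 0 1) {φ 0}ᶜ := fun y hy h =>
    ne_zero_of_mem_unit_sphere ⟨y, hy⟩ (hφ.injective h)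
  obtain ⟨f, hf, hf0, hfφ⟩ := hM0 E _ isClosed_sphere φ hφ.continuous.continuousOn hφ1
  have hclosed : IsClosed (f '' closedBall 0 1) := ((isCompact_closedBall 0 1).image hf).isClosed
  have hnhds : φ ⁻¹' (f '' closedBall 0 1)ᶜ ∈ 𝓝 0 :=
    (hclosed.isOpen_compl.preimage hφ.continuous).mem_nhds <| by
      rintro ⟨y, -, hy⟩
      exact hf0 y hy
  obtain ⟨ε, hε, hεf⟩ := Metric.mem_nhds_iff.1 hnhds
  have hfε : ∀ y ∈ closedBall 0 1, f y ∉ φ '' ball 0 ε := by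
    rintro y hy ⟨v, hv, hvy⟩
    exact hεf hv (hvy ▸ mem_image_of_mem f hy)
  obtain ⟨q, hq, hq0, hqφ, hqpos, hqneg⟩ := exists_continuous_collapse hφ hε
  obtain ⟨F₀, hF₀, hF₀φ, hF₀f⟩ :=
    exists_continuousOn_sphere_of_eqOn_sphere hφ.continuous hf hfφ.symm
  obtain ⟨F, hF, -, hFF₀⟩ := hM _ _ isClosed_sphere F₀ hF₀ (mapsTo_univ _ _)
  obtain ⟨z, -, hz⟩ := exists_eq_zero_of_forall_sphere_ne_neg_smul (hq.comp hF).continuousOn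
    fun z hz k hk hqz => by
      rw [Function.comp_apply, hFF₀ hz] at hqz
      have hfst : (q (F₀ z)).fst = -(k • z.fst) := congrArg WithLp.fst hqz
      have hsnd : (q (F₀ z)).snd = -(k * z.snd) := congrArg WithLp.snd hqz
      rcases le_total 0 z.snd with hz' | hz'
      · rw [hF₀φ z hz hz'] at hfst hsnd
        obtain ⟨c, hc, hcz⟩ := hqφ z.fst
        have hzero : (c + k) • z.fst = 0 := by rw [add_smul, ← hcz, hfst, neg_add_cancel]
        rw [(smul_eq_zero.1 hzero).resolve_left (by linarith)] at hsnd
        linarith [mul_nonneg hk.le hz']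
      · rw [hF₀f z hz hz'] at hsnd
        have hz1 : z.fst ∈ closedBall 0 1 := mem_closedBall_zero_iff.2
          ((WithLp.norm_fst_le _ z).trans (mem_sphere_zero_iff_norm.1 hz).le)
        linarith [hqneg _ (hfε _ hz1), mul_nonpos_of_nonneg_of_nonpos hk.le hz']
  exact hq0 _ hz

end

/-! ### Interiors of balls in a manifold -/

section

variable {M : Type} [TopologicalSpace M] {n : ℕ} {A B S T : Set M} {x : M}

theorem LocallyInjectsInto.isOpen_of_homeomorph {E : Type*} [NormedAddCommGroup E]
    [InnerProductSpace ℝ E] [FiniteDimensional ℝ E] (hM : LocallyInjectsInto E M) {U : Set M}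
    (e : U ≃ₜ E) : IsOpen U := by
  have hemb : IsOpenEmbedding fun y => (e.symm y : M) :=
    hM.isOpenEmbedding (continuous_subtype_val.comp e.symm.continuous)
      (Subtype.val_injective.comp e.symm.injective)
  have hrange : range (fun y => (e.symm y : M)) = U := by
    rw [← Function.comp_def, e.symm.surjective.range_comp, Subtype.range_val]
  exact hrange ▸ hemb.isOpen_range

theorem mem_mInt_iff (hM : LocallyInjectsInto (EuclideanSpace ℝ (Fin n)) M) :
    x ∈ mInt n S ↔ x ∈ interior S ∧
      ∃ φ : EuclideanSpace ℝ (Fin n) → M, IsOpenEmbedding φ ∧ φ 0 = x := by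
  constructor
  · rintro ⟨-, U, hxU, hUS, -, ⟨e⟩⟩
    have hU : IsOpen U := hM.isOpen_of_homeomorph e
    refine ⟨interior_maximal hUS hU hxU, fun y => e.symm (y + e ⟨x, hxU⟩), ?_, by simp⟩
    exact hU.isOpenEmbedding_subtypeVal.comp
      (e.symm.isOpenEmbedding.comp (Homeomorph.addRight (e ⟨x, hxU⟩)).isOpenEmbedding)
  · rintro ⟨hxS, φ, hφ, rfl⟩
    obtain ⟨ρ, hρ, hball⟩ := Metric.mem_nhds_iff.1
      (hφ.continuous.continuousAt.preimage_mem_nhds (mem_interior_iff_mem_nhds.1 hxS))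
    let p := OpenPartialHomeomorph.univBall (0 : EuclideanSpace ℝ (Fin n)) ρ
    have hp : IsOpenEmbedding p :=
      p.isOpenEmbedding (OpenPartialHomeomorph.univBall_source 0 ρ)
    have hpball (y) : p y ∈ ball 0 ρ :=
      OpenPartialHomeomorph.univBall_target (0 : EuclideanSpace ℝ (Fin n)) hρ ▸
        p.map_source (by simp [p])
    refine ⟨interior_subset hxS, range (φ ∘ p), ⟨0, ?_⟩, ?_,
      (hφ.comp hp).isOpen_range.preimage continuous_subtype_val,
      ⟨(hφ.comp hp).isEmbedding.toHomeomorph.symm⟩⟩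
    · exact congrArg φ (OpenPartialHomeomorph.univBall_apply_zero 0 ρ)
    · rintro _ ⟨y, rfl⟩
      exact hball (hpball y)

theorem mInt_mono (hM : LocallyInjectsInto (EuclideanSpace ℝ (Fin n)) M) (hST : S ⊆ T) :
    mInt n S ⊆ mInt n T := fun _ hx =>
  (mem_mInt_iff hM).2 (((mem_mInt_iff hM).1 hx).imp_left (interior_mono hST ·))

theorem mInt_inter (hM : LocallyInjectsInto (EuclideanSpace ℝ (Fin n)) M) (S T : Set M) :
    mInt n (S ∩ T) = mInt n S ∩ mInt n T := by
  ext x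
  simp only [mem_inter_iff, mem_mInt_iff hM, interior_inter]
  tauto

theorem exists_isEmbedding_range_of_homeomorph_closedBall {E : Type*} [NormedAddCommGroup E]
    [NormedSpace ℝ E] (h : A ≃ₜ closedBall (0 : E) 1) :
    ∃ j : E → M, IsEmbedding j ∧ range j = Subtype.val '' {y : A | ‖(h y : E)‖ < 1} := by
  let i : ball (0 : E) 1 → closedBall (0 : E) 1 := inclusion ball_subset_closedBall
  have hj : IsEmbedding fun v => (h.symm (i (Homeomorph.unitBall v)) : M) :=
    IsEmbedding.subtypeVal.comp <| h.symm.isEmbedding.comp <|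
      (IsEmbedding.inclusion ball_subset_closedBall).comp Homeomorph.unitBall.isEmbedding
  refine ⟨_, hj, Subset.antisymm ?_ ?_⟩
  · rintro _ ⟨v, rfl⟩
    have hv : ‖(h (h.symm (i (Homeomorph.unitBall v))) : E)‖ < 1 := by
      rw [h.apply_symm_apply]
      exact mem_ball_zero_iff.1 (Homeomorph.unitBall v).2
    exact mem_image_of_mem _ hv
  · rintro _ ⟨y, hy, rfl⟩
    refine ⟨Homeomorph.unitBall.symm ⟨h y, mem_ball_zero_iff.2 hy⟩, ?_⟩
    simp [i]

theorem mInt_eq_of_homeomorph_closedBall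
    (h : A ≃ₜ closedBall (0 : EuclideanSpace ℝ (Fin n)) 1) :
    mInt n A = Subtype.val '' {y : A | ‖(h y : EuclideanSpace ℝ (Fin n))‖ < 1} := by
  refine Subset.antisymm ?_ ?_
  · rintro x ⟨-, U, hxU, hUA, -, ⟨e⟩⟩
    let k : EuclideanSpace ℝ (Fin n) → EuclideanSpace ℝ (Fin n) :=
      fun z => h (inclusion hUA (e.symm z))
    have hk : Continuous k := continuous_subtype_val.comp
      (h.continuous.comp ((continuous_inclusion hUA).comp e.symm.continuous))
    have hk_inj : Function.Injective k := Subtype.val_injective.comp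
      (h.injective.comp ((inclusion_injective hUA).comp e.symm.injective))
    have hrange : range k ⊆ ball 0 1 := by
      rw [← interior_closedBall _ one_ne_zero, ← image_univ]
      refine interior_maximal ?_ (isOpen_image_of_injOn isOpen_univ hk.continuousOn hk_inj.injOn)
      rintro _ ⟨z, -, rfl⟩
      exact (h _).2
    refine ⟨⟨x, hUA hxU⟩, ?_, rfl⟩
    have hx : k (e ⟨x, hxU⟩) = h ⟨x, hUA hxU⟩ := by simp [k]
    exact mem_ball_zero_iff.1 (hx ▸ hrange (mem_range_self _))
  · rintro _ ⟨y, hy, rfl⟩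
    obtain ⟨j, hj, hrange⟩ := exists_isEmbedding_range_of_homeomorph_closedBall h
    refine ⟨y.2, range j, hrange ▸ mem_image_of_mem _ hy, ?_, ?_, ⟨hj.toHomeomorph.symm⟩⟩
    · rw [hrange]
      exact Subtype.coe_image_subset _ _
    · rw [hrange, preimage_image_eq _ Subtype.val_injective]
      exact isOpen_lt (continuous_subtype_val.comp h.continuous).norm continuous_const

theorem nonempty_mInt_homeomorph (h : A ≃ₜ closedBall (0 : EuclideanSpace ℝ (Fin n)) 1) :
    Nonempty (mInt n A ≃ₜ EuclideanSpace ℝ (Fin n)) := by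
  obtain ⟨j, hj, hrange⟩ := exists_isEmbedding_range_of_homeomorph_closedBall h
  rw [mInt_eq_of_homeomorph_closedBall h, ← hrange]
  exact ⟨hj.toHomeomorph.symm⟩

theorem isAbsoluteExtensor_inter_of_notMem_mInt
    (h : A ≃ₜ closedBall (0 : EuclideanSpace ℝ (Fin n)) 1) (hx : x ∉ mInt n A)
    (hT : {x}ᶜ ⊆ T) : IsAbsoluteExtensor.{0} (A ∩ T) :=
  isAbsoluteExtensor_inter_of_homeomorph_closedBall h fun y hy => hT fun hyx => hx <| by
    rw [← mem_singleton_iff.1 hyx, mInt_eq_of_homeomorph_closedBall h]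
    exact mem_image_of_mem _ hy

theorem mInt_univ_subset_union [T2Space M]
    (hM : LocallyInjectsInto (EuclideanSpace ℝ (Fin n)) M) (hAB : A ∪ B = univ)
    (a : A ≃ₜ closedBall (0 : EuclideanSpace ℝ (Fin n)) 1)
    (b : B ≃ₜ closedBall (0 : EuclideanSpace ℝ (Fin n)) 1)
    (c : (A ∩ B : Set M) ≃ₜ closedBall (0 : EuclideanSpace ℝ (Fin n)) 1) :
    mInt n univ ⊆ mInt n A ∪ mInt n B := by
  intro x hx
  by_contra hxAB
  obtain ⟨hxA, hxB⟩ := not_or.1 hxAB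
  have hxC : x ∉ mInt n (A ∩ B) := fun h => hxA (mInt_mono hM inter_subset_left h)
  have hclosed {S : Set M} (s : S ≃ₜ closedBall (0 : EuclideanSpace ℝ (Fin n)) 1) : IsClosed S :=
    have : CompactSpace S := s.symm.compactSpace
    (isCompact_iff_compactSpace.2 this).isClosed
  have hext {T : Set M} (hT : {x}ᶜ ⊆ T) : IsAbsoluteExtensor.{0} T := by
    simpa only [hAB, univ_inter] using IsAbsoluteExtensor.union (hclosed a) (hclosed b)
      (isAbsoluteExtensor_inter_of_notMem_mInt a hxA hT)
      (isAbsoluteExtensor_inter_of_notMem_mInt b hxB hT)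
      (isAbsoluteExtensor_inter_of_notMem_mInt c hxC hT)
  obtain ⟨-, φ, hφ, rfl⟩ := (mem_mInt_iff hM).1 hx
  exact not_isAbsoluteExtensor_compl_singleton hφ (hext (subset_univ _)) (hext subset_rfl)

end

theorem interior_of_closed_splitter_splits_general (n : ℕ) (M : Type) [TopologicalSpace M]
    [T2Space M] (hM : LocallyInjectsInto (EuclideanSpace ℝ (Fin n)) M) (A B C : Set M)
    (hAB : A ∪ B = univ) (hABC : A ∩ B = C)
    (hA : Nonempty (A ≃ₜ closedBall (0 : EuclideanSpace ℝ (Fin n)) 1))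
    (hB : Nonempty (B ≃ₜ closedBall (0 : EuclideanSpace ℝ (Fin n)) 1))
    (hC : Nonempty (C ≃ₜ closedBall (0 : EuclideanSpace ℝ (Fin n)) 1)) :
    mInt n univ = mInt n A ∪ mInt n B ∧
    mInt n A ∩ mInt n B = mInt n C ∧
    Nonempty (mInt n A ≃ₜ EuclideanSpace ℝ (Fin n)) ∧
    Nonempty (mInt n B ≃ₜ EuclideanSpace ℝ (Fin n)) ∧
    Nonempty (mInt n C ≃ₜ EuclideanSpace ℝ (Fin n)) := by
  subst hABC
  obtain ⟨⟨a⟩, ⟨b⟩, ⟨c⟩⟩ := And.intro hA (And.intro hB hC)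
  exact ⟨(mInt_univ_subset_union hM hAB a b c).antisymm
      (union_subset (mInt_mono hM (subset_univ A)) (mInt_mono hM (subset_univ B))),
    (mInt_inter hM A B).symm, nonempty_mInt_homeomorph a, nonempty_mInt_homeomorph b,
    nonempty_mInt_homeomorph c⟩

end

/-- Proposition 1.2.1: if a manifold with boundary splits into closed `n`-balls, then its
manifold interior splits into open `n`-cells. -/
theorem interior_of_closed_splitter_splits (n : ℕ) (hn : 1 ≤ n)
    (M : Type) [TopologicalSpace M] [T2Space M] (hM : LocallyHalfSpace hn M)
    (A B C : Set M) (hAB : A ∪ B = Set.univ) (hABC : A ∩ B = C)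
    (hA : Nonempty (↥A ≃ₜ ↥(Metric.closedBall (0 : EuclideanSpace ℝ (Fin n)) 1)))
    (hB : Nonempty (↥B ≃ₜ ↥(Metric.closedBall (0 : EuclideanSpace ℝ (Fin n)) 1)))
    (hC : Nonempty (↥C ≃ₜ ↥(Metric.closedBall (0 : EuclideanSpace ℝ (Fin n)) 1))) :
    mInt n (Set.univ : Set M) = mInt n A ∪ mInt n B ∧
    mInt n A ∩ mInt n B = mInt n C ∧
    Nonempty (↥(mInt n A) ≃ₜ EuclideanSpace ℝ (Fin n)) ∧
    Nonempty (↥(mInt n B) ≃ₜ EuclideanSpace ℝ (Fin n)) ∧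
    Nonempty (↥(mInt n C) ≃ₜ EuclideanSpace ℝ (Fin n)) :=
  interior_of_closed_splitter_splits_general n M hM.locallyInjectsInto A B C hAB hABC hA hB hC
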